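/- arXiv:1501.03377 — 2 statements merged into one kernel-verified Lean document; each statement's English description precedes it below -/
import Mathlib

section
/- Let (G,x,y) encode a reflexive regular map that is simple and satisfies 2q² > |G| (density exceeding 1/2). Then p = 3, i.e. the order of x is 3. -/
namespace RegularMap

variable {G : Type*} [Group G]

/-- The vertex set of the map: left cosets of the cyclic subgroup generated by `y`. -/
abbrev Vertex (y : G) : Type _ := G ⧸ Subgroup.zpowers y

/-- The rotation about the vertex `v = g⟨y⟩`, namely `g * y * g⁻¹`. -/
def rot (y : G) (v : Vertex y) : G :=
  Quotient.liftOn' v (fun g => g * y * g⁻¹) (by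
    intro a b h
    obtain ⟨k, hk⟩ := QuotientGroup.leftRel_apply.mp h
    have hk' : y ^ k = a⁻¹ * b := hk
    have hb : b = a * y ^ k := by rw [hk']; group
    subst hb
    group)

/-- Two vertices are adjacent iff they are distinct and form the endpoint pair of
some edge `g⟨x*y⟩`, whose endpoints are `g⟨y⟩` and `g*x*y⟨y⟩`. -/
def Adj (x y : G) (v w : Vertex y) : Prop :=
  v ≠ w ∧ ∃ g : G,
    ({v, w} : Set (Vertex y)) = {QuotientGroup.mk g, QuotientGroup.mk (g * x * y)}

/-- The map is simple: no edge has equal endpoints, and distinct edges (left cosets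
of `⟨x*y⟩`) have distinct endpoint pairs. -/
def IsSimple (x y : G) : Prop :=
  (∀ g : G, (QuotientGroup.mk g : Vertex y) ≠ QuotientGroup.mk (g * x * y)) ∧
  ∀ g h : G,
    ({QuotientGroup.mk g, QuotientGroup.mk (g * x * y)} : Set (Vertex y)) =
      {QuotientGroup.mk h, QuotientGroup.mk (h * x * y)} →
    (QuotientGroup.mk g : G ⧸ Subgroup.zpowers (x * y)) = QuotientGroup.mk h

/-- The map is reflexive: some group automorphism inverts both `x` and `y`. -/
def IsReflexive (x y : G) : Prop :=
  ∃ σ : G ≃* G, σ x = x⁻¹ ∧ σ y = y⁻¹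

/-- An automorphism of the map (given a reflection σ): either orientation preserving,
`g⟨y⟩ ↦ a*g⟨y⟩`, or orientation reversing, `g⟨y⟩ ↦ a*σ(g)⟨y⟩`. -/
def IsMapAut (y : G) (σ : G ≃* G) (φ : Vertex y → Vertex y) : Prop :=
  (∃ a : G, ∀ g : G, φ (QuotientGroup.mk g) = QuotientGroup.mk (a * g)) ∨
  (∃ a : G, ∀ g : G, φ (QuotientGroup.mk g) = QuotientGroup.mk (a * σ g))

/-- `v'` is a diagonal neighbour of `v`: `v' = S_w² • v` for some vertex `w` adjacent to `v`. -/
def DiagNeighbor (x y : G) (v v' : Vertex y) : Prop :=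
  ∃ w : Vertex y, Adj x y v w ∧ v' = rot y w ^ 2 • v

/-- Diagonal alignment: the reflexive-transitive closure of the diagonal-neighbour relation. -/
def Aligned (x y : G) : Vertex y → Vertex y → Prop :=
  Relation.ReflTransGen (DiagNeighbor x y)

/-- The primitive period `J`: the least `j ≥ 1` such that `S_v^j` fixes every vertex
diagonally aligned with `v` (this is independent of `v`). -/
noncomputable def primPeriod (x y : G) : ℕ :=
  sInf {j : ℕ | 1 ≤ j ∧ ∀ v v' : Vertex y, Aligned x y v v' → rot y v ^ j • v' = v'}

/-- The even period `T = lcm(J, 2)`. -/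
noncomputable def evenPeriod (x y : G) : ℕ := Nat.lcm (primPeriod x y) 2

/-- Relators of the tetrahedral group ⟨X,Y ∣ X³, Y³, (XY)²⟩. -/
def tetRels : Set (FreeGroup (Fin 2)) :=
  {FreeGroup.of 0 ^ 3, FreeGroup.of 1 ^ 3, (FreeGroup.of 0 * FreeGroup.of 1) ^ 2}

/-- Relators of the Fermat group ⟨X,Y ∣ X³, Y^(2n), (XY)², [X,Y]³⟩. -/
def fermatRels (n : ℕ) : Set (FreeGroup (Fin 2)) :=
  {FreeGroup.of 0 ^ 3, FreeGroup.of 1 ^ (2 * n), (FreeGroup.of 0 * FreeGroup.of 1) ^ 2,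
    (FreeGroup.of 0 * FreeGroup.of 1 * (FreeGroup.of 0)⁻¹ * (FreeGroup.of 1)⁻¹) ^ 3}

/-- `(G,x,y)` is the tetrahedral map: the canonical homomorphism from the presented
group ⟨X,Y ∣ X³, Y³, (XY)²⟩ sending X to x and Y to y is an isomorphism. -/
def IsTet (G : Type*) [Group G] (x y : G) : Prop :=
  ∃ e : PresentedGroup tetRels ≃* G,
    e (PresentedGroup.of 0) = x ∧ e (PresentedGroup.of 1) = y

/-- `(G,x,y)` is the Fermat map `Fer(n)`: the canonical homomorphism from the Fermat
group `G_n` sending X to x and Y to y is an isomorphism. -/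
def IsFermat (n : ℕ) (G : Type*) [Group G] (x y : G) : Prop :=
  ∃ e : PresentedGroup (fermatRels n) ≃* G,
    e (PresentedGroup.of 0) = x ∧ e (PresentedGroup.of 1) = y

/-!
Write `r = x * y` and `Y = ⟨y⟩`. In a simple map no rotation other than `1` fixes an edge together
with its ends, so `Y ∩ rYr⁻¹ = 1` and the double coset `YrY` has `q ^ 2` elements. By the density
hypothesis, any two sets of `q ^ 2` elements of `G` meet.

Applied to `YrY` and `r(YrY)⁻¹`, this gives some `a ∈ Y` with `rar⁻¹ ∈ YrY`. Put `g = ryr⁻¹`.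
A finite cyclic group has at most one subgroup of each order, so `g` normalizes `C = Y ∩ gYg⁻¹`.
Then powers of `g` such as `rar⁻¹` normalize `C`, and hence so does `r`; this forces `C = 1`.
Therefore `YgY` has `q ^ 2` elements too, and it meets, hence equals, `YrY`.

So `ryr = arb` with `a, b ∈ Y`. The reflection of the map that fixes `r` and inverts `Y` gives
`ryr = bra`, whence `a = b` by uniqueness. The same argument applied to `rar = yra⁻¹` gives
`a = y⁻¹`, and `ryr = y⁻¹ry⁻¹` says `x ^ 3 = 1`.
-/

section DoubleCoset

open DoubleCoset
open scoped Pointwise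

theorem mul_mul_injective_of_disjoint_conj {H K : Subgroup G} {g : G}
    (h : Disjoint H (MulAut.conj g • K)) :
    Function.Injective fun s : H × K => (s.1 : G) * g * s.2 := by
  rintro ⟨a, b⟩ ⟨a', b'⟩ (hab : (a : G) * g * b = a' * g * b')
  have hconj : (a' : G)⁻¹ * a = MulAut.conj g • ((b' : G) * (b : G)⁻¹) := by
    rw [MulAut.smul_def, MulAut.conj_apply, eq_mul_inv_iff_mul_eq, mul_assoc, inv_mul_eq_iff_eq_mul,
      ← mul_assoc, ← mul_assoc, eq_mul_inv_iff_mul_eq, hab]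
  have hone : (a' : G)⁻¹ * a = 1 := by
    refine Subgroup.disjoint_def.mp h (mul_mem (inv_mem a'.2) a.2) ?_
    rw [hconj]
    exact Subgroup.smul_mem_pointwise_smul _ _ _ (mul_mem b'.2 (inv_mem b.2))
  obtain rfl : a' = a := Subtype.ext (inv_mul_eq_one.mp hone)
  exact Prod.ext rfl (Subtype.ext (mul_left_cancel hab))

theorem ncard_doubleCoset_of_disjoint_conj {H K : Subgroup G} {g : G}
    (h : Disjoint H (MulAut.conj g • K)) :
    (doubleCoset g (H : Set G) K).ncard = Nat.card H * Nat.card K := by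
  have hrange : doubleCoset g (H : Set G) K =
      Set.range fun s : H × K => (s.1 : G) * g * s.2 := by
    ext z
    simp [mem_doubleCoset, eq_comm]
  rw [hrange, Set.ncard_range_of_injective (mul_mul_injective_of_disjoint_conj h), Nat.card_prod]

theorem not_disjoint_of_natCard_lt_ncard_add_ncard {α : Type*} [Finite α] {s t : Set α}
    (h : Nat.card α < s.ncard + t.ncard) : ¬ Disjoint s t := fun hst =>
  (Set.ncard_union_eq hst ▸ h).not_ge (Set.ncard_le_card _)

variable [Finite G] {H : Subgroup G}

theorem mem_doubleCoset_of_natCard_lt {g r : G}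
    (hg : Disjoint H (MulAut.conj g • H)) (hr : Disjoint H (MulAut.conj r • H))
    (hcard : Nat.card G < 2 * Nat.card H ^ 2) : g ∈ doubleCoset r (H : Set G) H := by
  refine mem_doubleCoset_of_not_disjoint (not_disjoint_of_natCard_lt_ncard_add_ncard ?_)
  rw [ncard_doubleCoset_of_disjoint_conj hg, ncard_doubleCoset_of_disjoint_conj hr]
  linarith

theorem exists_conj_mem_doubleCoset {r : G} (hr : Disjoint H (MulAut.conj r • H))
    (hcard : Nat.card G < 2 * Nat.card H ^ 2) :
    ∃ a ∈ H, r * a * r⁻¹ ∈ doubleCoset r (H : Set G) H := by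
  have hmeet : ¬ Disjoint (r • (doubleCoset r (H : Set G) H)⁻¹) (doubleCoset r (H : Set G) H) := by
    apply not_disjoint_of_natCard_lt_ncard_add_ncard
    rw [Set.ncard_smul_set, Set.ncard_inv, ncard_doubleCoset_of_disjoint_conj hr]
    linarith
  obtain ⟨z, ⟨w, hw, rfl⟩, hz⟩ := Set.not_disjoint_iff.mp hmeet
  obtain ⟨a, ha, b, hb, hw⟩ := mem_doubleCoset.mp (Set.mem_inv.mp hw)
  obtain ⟨c, hc, d, hd, (hz : r * w = c * r * d)⟩ := mem_doubleCoset.mp hz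
  refine ⟨b⁻¹, inv_mem hb, mem_doubleCoset.mpr ⟨c, hc, d * a, mul_mem hd ha, ?_⟩⟩
  calc r * b⁻¹ * r⁻¹ = r * w⁻¹⁻¹ * a := by rw [hw]; group
    _ = c * r * (d * a) := by rw [inv_inv, hz, mul_assoc _ d]

end DoubleCoset

section Cyclic

open DoubleCoset
open scoped Pointwise

theorem eq_ker_powMonoidHom_card {A : Type*} [CommGroup A] [IsCyclic A] [Finite A]
    (B : Subgroup A) : B = (powMonoidHom (Nat.card B) : A →* A).ker := by
  refine Subgroup.eq_of_le_of_card_ge (fun b hb => ?_) ?_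
  · exact orderOf_dvd_iff_pow_eq_one.mp (B.orderOf_dvd_natCard hb)
  · rw [IsCyclic.card_powMonoidHom_ker, Nat.gcd_eq_right B.card_subgroup_dvd_card]

theorem eq_of_le_of_natCard_eq {A B C : Subgroup G} [IsCyclic C] [Finite C]
    (hA : A ≤ C) (hB : B ≤ C) (hcard : Nat.card A = Nat.card B) : A = B := by
  let _ : CommGroup C := IsCyclic.commGroup
  have hcard' : Nat.card (A.subgroupOf C) = Nat.card (B.subgroupOf C) := by
    rw [Nat.card_congr (Subgroup.subgroupOfEquivOfLe hA).toEquiv, hcard,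
      Nat.card_congr (Subgroup.subgroupOfEquivOfLe hB).toEquiv]
  have hsub : A.subgroupOf C = B.subgroupOf C := by
    rw [eq_ker_powMonoidHom_card (A.subgroupOf C), hcard', ← eq_ker_powMonoidHom_card]
  rwa [Subgroup.subgroupOf_inj, inf_of_le_left hA, inf_of_le_left hB] at hsub

theorem mem_normalizer_inf_conj (H : Subgroup G) [IsCyclic H] [Finite H] (g : G) :
    g ∈ Subgroup.normalizer (H ⊓ MulAut.conj g • H : Subgroup G) := by
  set I := H ⊓ MulAut.conj g • H
  have hle : (MulAut.conj g)⁻¹ • I ≤ H :=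
    Subgroup.subset_pointwise_smul_iff.mp inf_le_right
  have hcard : Nat.card ((MulAut.conj g)⁻¹ • I : Subgroup G) = Nat.card I :=
    (Nat.card_congr (Subgroup.equivSMul _ I).toEquiv).symm
  have hfix : (MulAut.conj g)⁻¹ • I = I := eq_of_le_of_natCard_eq hle inf_le_left hcard
  exact Subgroup.mem_normalizer_iff_map_conj_eq.mpr (inv_smul_eq_iff.mp hfix).symm

theorem le_normalizer_of_le {H K : Subgroup G} [IsMulCommutative H] (h : K ≤ H) :
    H ≤ Subgroup.normalizer K :=
  Subgroup.le_normalizer_of_normal_subgroupOf h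

theorem eq_bot_of_mem_normalizer {H K : Subgroup G} {r : G}
    (hr : Disjoint H (MulAut.conj r • H)) (hK : K ≤ H) (hrK : r ∈ Subgroup.normalizer K) :
    K = ⊥ := by
  refine disjoint_self.mp (hr.mono hK ?_)
  rw [← Subgroup.mem_normalizer_iff_map_conj_eq.mp hrK]
  exact Subgroup.map_mono hK

theorem mem_of_conj_mem_doubleCoset {N : Subgroup G} {y r a : G}
    (hy : Subgroup.zpowers y ≤ N) (hyr : r * y * r⁻¹ ∈ N) (ha : a ∈ Subgroup.zpowers y)
    (har : r * a * r⁻¹ ∈ doubleCoset r (Subgroup.zpowers y : Set G) (Subgroup.zpowers y)) :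
    r ∈ N := by
  obtain ⟨k, rfl⟩ := Subgroup.mem_zpowers_iff.mp ha
  obtain ⟨b, hb, c, hc, hbc⟩ := mem_doubleCoset.mp har
  have hmem : b * r * c ∈ N := by
    rw [← hbc, ← conj_zpow]
    exact zpow_mem hyr k
  rwa [N.mul_mem_cancel_right (hy hc), N.mul_mem_cancel_left (hy hb)] at hmem

theorem disjoint_conj_of_conj_mem_doubleCoset {y r a : G} [Finite (Subgroup.zpowers y)]
    (hr : Disjoint (Subgroup.zpowers y) (MulAut.conj r • Subgroup.zpowers y))
    (ha : a ∈ Subgroup.zpowers y)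
    (har : r * a * r⁻¹ ∈ doubleCoset r (Subgroup.zpowers y : Set G) (Subgroup.zpowers y)) :
    Disjoint (Subgroup.zpowers y) (MulAut.conj (r * y * r⁻¹) • Subgroup.zpowers y) := by
  have hrN := mem_of_conj_mem_doubleCoset (le_normalizer_of_le inf_le_left)
    (mem_normalizer_inf_conj (Subgroup.zpowers y) (r * y * r⁻¹)) ha har
  exact disjoint_iff.mpr (eq_bot_of_mem_normalizer hr inf_le_left hrN)

theorem conj_mem_doubleCoset_zpowers [Finite G] {y r : G}
    (hr : Disjoint (Subgroup.zpowers y) (MulAut.conj r • Subgroup.zpowers y))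
    (hcard : Nat.card G < 2 * orderOf y ^ 2) :
    r * y * r⁻¹ ∈ doubleCoset r (Subgroup.zpowers y : Set G) (Subgroup.zpowers y) := by
  rw [← Nat.card_zpowers] at hcard
  obtain ⟨a, ha, har⟩ := exists_conj_mem_doubleCoset hr hcard
  exact mem_doubleCoset_of_natCard_lt (disjoint_conj_of_conj_mem_doubleCoset hr ha har) hr hcard

end Cyclic

section Reflection

open DoubleCoset
open scoped Pointwise

theorem exists_mulEquiv_inv_mul_inv {x y : G} (h : IsReflexive x y) :
    ∃ τ : G ≃* G, τ (x * y) = (x * y)⁻¹ ∧ τ y = y⁻¹ := by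
  obtain ⟨σ, hx, hy⟩ := h
  refine ⟨σ.trans (MulAut.conj y⁻¹), ?_, ?_⟩ <;> simp [hx, hy, mul_assoc]

variable {F : Type*} [FunLike F G G] [MonoidHomClass F G G] {τ : F}

theorem map_eq_inv_of_mem_zpowers {y z : G} (hy : τ y = y⁻¹) (hz : z ∈ Subgroup.zpowers y) :
    τ z = z⁻¹ := by
  obtain ⟨k, rfl⟩ := Subgroup.mem_zpowers_iff.mp hz
  rw [map_zpow, hy, inv_zpow]

variable {H : Subgroup G} {r : G}

theorem eq_of_mul_mul_eq_mul_mul {a b d : G}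
    (hr : Disjoint H (MulAut.conj r • H)) (hτr : τ r = r⁻¹) (hτ : ∀ h ∈ H, τ h = h⁻¹)
    (hd : d ∈ H) (ha : a ∈ H) (hb : b ∈ H) (h : r * d * r = a * r * b) : a = b := by
  have hrev : r * d * r = b * r * a := by
    have hmap := congrArg τ h
    simp only [map_mul, hτr, hτ d hd, hτ a ha, hτ b hb] at hmap
    simpa [mul_assoc] using congrArg (·⁻¹) hmap
  have hpair : ((⟨a, ha⟩, ⟨b, hb⟩) : H × H) = (⟨b, hb⟩, ⟨a, ha⟩) :=
    mul_mul_injective_of_disjoint_conj hr (h.symm.trans hrev)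
  exact congrArg (fun s : H × H => (s.1 : G)) hpair

theorem mul_mul_eq_inv_mul_mul_inv {d : G}
    (hr : Disjoint H (MulAut.conj r • H)) (hrr : r * r = 1) (hτr : τ r = r⁻¹)
    (hτ : ∀ h ∈ H, τ h = h⁻¹) (hd : d ∈ H) (h : r * d * r ∈ doubleCoset r (H : Set G) H) :
    r * d * r = d⁻¹ * r * d⁻¹ := by
  obtain ⟨a, ha, b, hb, hab⟩ := mem_doubleCoset.mp h
  obtain rfl : a = b := eq_of_mul_mul_eq_mul_mul hr hτr hτ hd ha hb hab
  have hflip : r * a * r = d * r * a⁻¹ := by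
    rw [eq_mul_inv_iff_mul_eq, mul_assoc r a r, mul_assoc r, ← hab, ← mul_assoc, ← mul_assoc, hrr,
      one_mul]
  have hda : d = a⁻¹ := eq_of_mul_mul_eq_mul_mul hr hτr hτ ha hd (inv_mem ha) hflip
  rw [hab, hda, inv_inv]

theorem mul_inv_pow_three_eq_one {d : G} (hrr : r * r = 1) (h : r * d * r = d⁻¹ * r * d⁻¹) :
    (r * d⁻¹) ^ 3 = 1 :=
  calc (r * d⁻¹) ^ 3 = r * (d⁻¹ * r * d⁻¹) * r * d⁻¹ := by rw [pow_three]; group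
    _ = r * r * d * (r * r) * d⁻¹ := by rw [← h]; group
    _ = 1 := by rw [hrr]; group

end Reflection

section Simple

open scoped Pointwise

variable {x y : G}

theorem IsSimple.mul_notMem_zpowers (h : IsSimple x y) : x * y ∉ Subgroup.zpowers y := fun hxy =>
  h.1 1 (QuotientGroup.eq.mpr (by simpa using hxy))

theorem IsSimple.disjoint_conj (h : IsSimple x y) (hxy : (x * y) ^ 2 = 1) :
    Disjoint (Subgroup.zpowers y) (MulAut.conj (x * y) • Subgroup.zpowers y) := by
  refine Subgroup.disjoint_def.mpr fun {a} ha har => ?_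
  have hsource : (QuotientGroup.mk 1 : Vertex y) = QuotientGroup.mk a :=
    QuotientGroup.eq.mpr (by simpa using ha)
  have htarget : (QuotientGroup.mk (1 * x * y) : Vertex y) = QuotientGroup.mk (a * x * y) := by
    rw [Subgroup.mem_pointwise_smul_iff_inv_smul_mem, ← map_inv, MulAut.smul_def,
      MulAut.conj_apply] at har
    exact QuotientGroup.eq.mpr (by simpa [mul_assoc] using har)
  have hedge : a ∈ Subgroup.zpowers (x * y) := by
    simpa using QuotientGroup.eq.mp (h.2 1 a (by rw [hsource, htarget]))
  obtain ⟨k, rfl⟩ := Subgroup.mem_zpowers_iff.mp hedge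
  have hsq : (x * y) ^ (2 : ℤ) = 1 := by exact_mod_cast hxy
  obtain ⟨m, rfl | rfl⟩ := Int.even_or_odd' k
  · rw [zpow_mul, hsq, one_zpow]
  · rw [zpow_add, zpow_mul, hsq, one_zpow, one_mul, zpow_one] at ha
    exact absurd ha h.mul_notMem_zpowers

end Simple

/-- A reflexive regular map that is simple with density exceeding 1/2 has p = 3. -/
theorem face_size_eq_three
    (G : Type*) [Group G] [Finite G] (x y : G)
    (hgen : Subgroup.closure {x, y} = ⊤) (hxy : (x * y) ^ 2 = 1)
    (hrefl : IsReflexive x y) (hsimple : IsSimple x y)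
    (hden : 2 * orderOf y ^ 2 > Nat.card G) :
    orderOf x = 3 := by
  have hrr : x * y * (x * y) = 1 := by rw [← pow_two, hxy]
  have hr := hsimple.disjoint_conj hxy
  obtain ⟨τ, hτr, hτy⟩ := exists_mulEquiv_inv_mul_inv hrefl
  have hface := conj_mem_doubleCoset_zpowers hr hden
  rw [inv_eq_of_mul_eq_one_left hrr] at hface
  have hx_ne : x ≠ 1 := by
    rintro rfl
    exact hsimple.mul_notMem_zpowers (by simp)
  have hx_pow : x ^ 3 = 1 := by
    rw [← mul_inv_cancel_right x y]
    exact mul_inv_pow_three_eq_one hrr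
      (mul_mul_eq_inv_mul_mul_inv hr hrr hτr (fun _ => map_eq_inv_of_mem_zpowers hτy)
        (Subgroup.mem_zpowers y) hface)
  exact orderOf_eq_prime hx_pow hx_ne

end RegularMap
end

section
/- Let (G,x,y) encode a reflexive regular map, let v and v' be vertices, and let j be an integer with S_v^j·v' = v'. Let φ_1,…,φ_n be automorphisms of the map and suppose that for each i there is a vertex v_i such that S_v^j fixes both v_i and φ_i(v_i). Then S_v^j fixes φ_n(φ_{n-1}(⋯φ_1(v')⋯)). -/
namespace RegularMap

variable {G : Type*} [Group G]

/-!
Let `S_w` be the rotation about `w`; it generates the stabilizer of `w`. Hence `S_v ^ j` fixes `w`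
iff it lies in the finite cyclic group `⟨S_w⟩`. There it has the same order as `S_w ^ j`, being
conjugate to it in `G`, and a finite cyclic group has at most one subgroup of each order; so
`S_v ^ j` fixes `w` iff `⟨S_w ^ j⟩ = ⟨S_v ^ j⟩`. A map automorphism `φ` acts on the groups
`⟨S_w ^ j⟩` through an automorphism of `G`, so the vertices with `⟨S_w ^ j⟩ = ⟨S_v ^ j⟩` are mapped
to vertices sharing one group `⟨S_{φ w} ^ j⟩`, which is `⟨S_v ^ j⟩` as soon as this holds for one
of them.
-/

open MulAction Subgroup

theorem mem_zpowers_of_pow_orderOf_eq_one [Finite G] [IsCyclic G] {a b : G}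
    (h : a ^ orderOf b = 1) : a ∈ zpowers b := by
  classical
  have := Fintype.ofFinite G
  have hsub : (zpowers b : Set G) ⊆ {g | g ^ orderOf b = 1} := by
    rintro _ ⟨k, rfl⟩
    exact zpow_pow_orderOf
  have hcard : {g : G | g ^ orderOf b = 1}.ncard ≤ (zpowers b : Set G).ncard := by
    calc {g : G | g ^ orderOf b = 1}.ncard
        = (Finset.univ.filter fun g : G ↦ g ^ orderOf b = 1).card := by
          rw [← Set.ncard_coe_finset, Finset.coe_filter_univ]
      _ ≤ orderOf b := IsCyclic.card_pow_eq_one_le (orderOf_pos b)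
      _ = (zpowers b : Set G).ncard := (Nat.card_zpowers b).symm
  exact (Set.eq_of_subset_of_ncard_le hsub hcard).ge h

theorem mem_zpowers_of_orderOf_dvd {a b c : G} (hc : IsOfFinOrder c) (ha : a ∈ zpowers c)
    (hb : b ∈ zpowers c) (h : orderOf a ∣ orderOf b) : a ∈ zpowers b := by
  have : Finite (zpowers c) := finite_zpowers.mpr hc
  have hpow : (⟨a, ha⟩ : zpowers c) ^ orderOf (⟨b, hb⟩ : zpowers c) = 1 := by
    rwa [← orderOf_dvd_iff_pow_eq_one, orderOf_mk, orderOf_mk]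
  simpa [MonoidHom.map_zpowers] using
    mem_map_of_mem (zpowers c).subtype (mem_zpowers_of_pow_orderOf_eq_one hpow)

theorem zpowers_eq_zpowers_of_orderOf_eq {a b c : G} (hc : IsOfFinOrder c) (ha : a ∈ zpowers c)
    (hb : b ∈ zpowers c) (h : orderOf a = orderOf b) : zpowers a = zpowers b :=
  le_antisymm (zpowers_le.mpr (mem_zpowers_of_orderOf_dvd hc ha hb h.dvd))
    (zpowers_le.mpr (mem_zpowers_of_orderOf_dvd hc hb ha h.symm.dvd))

section Rotation

variable {y : G}

theorem rot_mk (g : G) : rot y (QuotientGroup.mk g) = g * y * g⁻¹ := rfl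

theorem isConj_rot (w : Vertex y) : IsConj y (rot y w) := by
  induction w using QuotientGroup.induction_on with
  | H g => exact isConj_iff.mpr ⟨g, rfl⟩

theorem orderOf_rot_zpow (w : Vertex y) (j : ℤ) : orderOf (rot y w ^ j) = orderOf (y ^ j) := by
  obtain ⟨g, hg⟩ := isConj_iff.mp (isConj_rot w)
  rw [← hg, conj_zpow]
  exact (MulAut.conj g).orderOf_eq (y ^ j)

theorem stabilizer_eq_zpowers_rot (w : Vertex y) : stabilizer G w = zpowers (rot y w) := by
  induction w using QuotientGroup.induction_on with
  | H g =>
    have hg : (QuotientGroup.mk g : Vertex y) = g • (QuotientGroup.mk 1 : Vertex y) := by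
      rw [Quotient.smul_mk, smul_eq_mul, mul_one]
    rw [rot_mk, hg, stabilizer_smul_eq_stabilizer_map_conj, stabilizer_quotient,
      MonoidHom.map_zpowers]
    rfl

theorem rot_zpow_smul_eq_self_iff (hy : IsOfFinOrder y) (v w : Vertex y) (j : ℤ) :
    rot y v ^ j • w = w ↔ zpowers (rot y w ^ j) = zpowers (rot y v ^ j) := by
  rw [← mem_stabilizer_iff, stabilizer_eq_zpowers_rot]
  have hw : rot y w ^ j ∈ zpowers (rot y w) := zpow_mem_zpowers _ j
  constructor
  · intro hv
    exact zpowers_eq_zpowers_of_orderOf_eq ((isConj_rot w).isOfFinOrder hy) hw hv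
      ((orderOf_rot_zpow w j).trans (orderOf_rot_zpow v j).symm)
  · intro h
    exact zpowers_le.mp (h ▸ zpowers_le.mpr hw)

end Rotation

namespace IsMapAut

variable {y : G} {σ : G ≃* G} {φ : Vertex y → Vertex y}

theorem exists_mulEquiv_rot_eq (hφ : IsMapAut y σ φ) (hσy : σ y = y⁻¹) :
    ∃ α : G ≃* G, (∀ w, rot y (φ w) = α (rot y w)) ∨ ∀ w, rot y (φ w) = (α (rot y w))⁻¹ := by
  obtain ⟨a, ha⟩ | ⟨a, ha⟩ := hφ
  · refine ⟨MulAut.conj a, .inl fun w ↦ ?_⟩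
    induction w using QuotientGroup.induction_on with
    | H g => simp [ha, rot_mk, mul_assoc]
  · refine ⟨σ.trans (MulAut.conj a), .inr fun w ↦ ?_⟩
    induction w using QuotientGroup.induction_on with
    | H g => simp [ha, rot_mk, hσy, mul_assoc]

theorem exists_zpowers_rot_zpow_eq_map (hφ : IsMapAut y σ φ) (hσy : σ y = y⁻¹) :
    ∃ α : G ≃* G, ∀ w (j : ℤ),
      zpowers (rot y (φ w) ^ j) = (zpowers (rot y w ^ j)).map α.toMonoidHom := by
  obtain ⟨α, hα | hα⟩ := hφ.exists_mulEquiv_rot_eq hσy <;>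
  exact ⟨α, fun w j ↦ by simp [hα, MonoidHom.map_zpowers]⟩

theorem rot_zpow_smul_eq_self (hφ : IsMapAut y σ φ) (hσy : σ y = y⁻¹) (hy : IsOfFinOrder y)
    {v u w : Vertex y} {j : ℤ} (hw : rot y v ^ j • w = w) (hφw : rot y v ^ j • φ w = φ w)
    (hu : rot y v ^ j • u = u) : rot y v ^ j • φ u = φ u := by
  obtain ⟨α, hα⟩ := hφ.exists_zpowers_rot_zpow_eq_map hσy
  rw [rot_zpow_smul_eq_self_iff hy] at hw hφw hu ⊢
  calc zpowers (rot y (φ u) ^ j)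
      = (zpowers (rot y u ^ j)).map α.toMonoidHom := hα u j
    _ = (zpowers (rot y w ^ j)).map α.toMonoidHom := by rw [hu, hw]
    _ = zpowers (rot y (φ w) ^ j) := (hα w j).symm
    _ = zpowers (rot y v ^ j) := hφw

end IsMapAut

theorem fixed_points_closed_under_auts_general {y : G} (hy : IsOfFinOrder y)
    {σ : G ≃* G} (hσy : σ y = y⁻¹) {v v' : Vertex y} {j : ℤ} (hfix : rot y v ^ j • v' = v')
    {n : ℕ} {φ : Fin n → Vertex y → Vertex y} (hφ : ∀ i, IsMapAut y σ (φ i))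
    (hfixed : ∀ i, ∃ w, rot y v ^ j • w = w ∧ rot y v ^ j • φ i w = φ i w) :
    rot y v ^ j • ((List.ofFn φ).foldl (fun w f => f w) v') =
      (List.ofFn φ).foldl (fun w f => f w) v' := by
  refine List.foldlRecOn (motive := fun u ↦ rot y v ^ j • u = u) _ _ hfix fun u hu f hf ↦ ?_
  obtain ⟨i, rfl⟩ := List.mem_ofFn.mp hf
  obtain ⟨w, hw, hφw⟩ := hfixed i
  exact (hφ i).rot_zpow_smul_eq_self hσy hy hw hφw hu

/-- The set of fixed points of `S_v^j` is closed under automorphisms that map some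
fixed point to a fixed point. -/
theorem fixed_points_closed_under_auts
    (G : Type*) [Group G] [Finite G] (x y : G)
    (hgen : Subgroup.closure {x, y} = ⊤) (hxy : (x * y) ^ 2 = 1)
    (σ : G ≃* G) (hσx : σ x = x⁻¹) (hσy : σ y = y⁻¹)
    (v v' : Vertex y) (j : ℤ) (hfix : rot y v ^ j • v' = v')
    (n : ℕ) (φ : Fin n → Vertex y → Vertex y) (hφ : ∀ i, IsMapAut y σ (φ i))
    (vs : Fin n → Vertex y)
    (hvs : ∀ i, rot y v ^ j • vs i = vs i ∧ rot y v ^ j • (φ i (vs i)) = φ i (vs i)) :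
    rot y v ^ j • ((List.ofFn φ).foldl (fun w f => f w) v') =
      (List.ofFn φ).foldl (fun w f => f w) v' :=
  fixed_points_closed_under_auts_general (isOfFinOrder_of_finite y) hσy hfix hφ
    fun i ↦ ⟨vs i, hvs i⟩

end RegularMap
end
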